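/- A labeled planar binary tree avoids the two patterns y(*, y(*,*)) and y(*, x(*, x(*,*))) if and only if it belongs to the class N, where N and R are the least classes of trees satisfying simultaneously: leaf ∈ N; x(u, v) ∈ N for all u, v ∈ N; y(u, r) ∈ N for all u ∈ N and r ∈ R; leaf ∈ R; x(u, leaf) ∈ R for all u ∈ N; and x(u, y(v, r)) ∈ R for all u, v ∈ N and r ∈ R. -/

import Mathlib

/-- Planar binary trees with internal vertices labeled by one of two symbols `x`, `y`. -/
inductive LTree : Type
  | leaf : LTree
  | x : LTree → LTree → LTree
  | y : LTree → LTree → LTree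

namespace LTree

/-- The subtree relation. -/
inductive Subtree : LTree → LTree → Prop
  | refl (t : LTree) : Subtree t t
  | xl {s u v : LTree} : Subtree s u → Subtree s (x u v)
  | xr {s u v : LTree} : Subtree s v → Subtree s (x u v)
  | yl {s u v : LTree} : Subtree s u → Subtree s (y u v)
  | yr {s u v : LTree} : Subtree s v → Subtree s (y u v)

/-- A tree matches (at the root) one of the two forbidden patterns
`y(*, y(*,*))` and `y(*, x(*, x(*,*)))`. -/
def IsBadFlex : LTree → Prop
  | y _ (y _ _) => True
  | y _ (x _ (x _ _)) => True
  | _ => False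

/-- A tree avoids the two patterns iff no subtree matches one of them. -/
def AvoidsFlex (t : LTree) : Prop := ∀ s : LTree, Subtree s t → ¬ IsBadFlex s

mutual
  /-- The least class `N` (normal monomials of noncom-Flex), defined simultaneously
  with `RFlex`. -/
  inductive NormalFlex : LTree → Prop
    | leaf : NormalFlex LTree.leaf
    | xn {u v : LTree} : NormalFlex u → NormalFlex v → NormalFlex (LTree.x u v)
    | yn {u r : LTree} : NormalFlex u → RFlex r → NormalFlex (LTree.y u r)

  /-- The least class `R` of trees allowed as right subtrees of a `y`-root. -/
  inductive RFlex : LTree → Prop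
    | leaf : RFlex LTree.leaf
    | xleaf {u : LTree} : NormalFlex u → RFlex (LTree.x u LTree.leaf)
    | xy {u v r : LTree} : NormalFlex u → NormalFlex v → RFlex r →
        RFlex (LTree.x u (LTree.y v r))
end

end LTree

/-!
Both sides obey the same recursion on trees. A tree avoids the patterns iff its two children do and
it does not itself match one at the root, which is only possible under a root `y`; membership in `N`
unfolds likewise, with membership of the right child in `R` as the extra condition under a root `y`.
The point is that `R` consists exactly of the trees in `N` that may stand to the right of a root `y`
without completing a pattern there.
-/

namespace LTree

variable {u v r : LTree}

section Subtree

variable {P : LTree → Prop}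

theorem forall_subtree_leaf_iff : (∀ s, Subtree s leaf → P s) ↔ P leaf := by
  refine ⟨fun h => h leaf (.refl leaf), fun h s hs => ?_⟩
  cases hs
  exact h

theorem forall_subtree_x_iff :
    (∀ s, Subtree s (x u v) → P s) ↔
      P (x u v) ∧ (∀ s, Subtree s u → P s) ∧ (∀ s, Subtree s v → P s) := by
  refine ⟨fun h => ⟨h _ (.refl _), fun s hs => h s hs.xl, fun s hs => h s hs.xr⟩, ?_⟩
  rintro ⟨h_root, h_left, h_right⟩ s hs
  cases hs with
  | refl => exact h_root
  | xl hs => exact h_left s hs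
  | xr hs => exact h_right s hs

theorem forall_subtree_y_iff :
    (∀ s, Subtree s (y u v) → P s) ↔
      P (y u v) ∧ (∀ s, Subtree s u → P s) ∧ (∀ s, Subtree s v → P s) := by
  refine ⟨fun h => ⟨h _ (.refl _), fun s hs => h s hs.yl, fun s hs => h s hs.yr⟩, ?_⟩
  rintro ⟨h_root, h_left, h_right⟩ s hs
  cases hs with
  | refl => exact h_root
  | yl hs => exact h_left s hs
  | yr hs => exact h_right s hs

end Subtree

theorem avoidsFlex_leaf : AvoidsFlex leaf :=
  forall_subtree_leaf_iff.2 id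

theorem avoidsFlex_x_iff : AvoidsFlex (x u v) ↔ AvoidsFlex u ∧ AvoidsFlex v :=
  forall_subtree_x_iff.trans (and_iff_right id)

theorem avoidsFlex_y_iff :
    AvoidsFlex (y u v) ↔ ¬ IsBadFlex (y u v) ∧ AvoidsFlex u ∧ AvoidsFlex v :=
  forall_subtree_y_iff

theorem normalFlex_x_iff : NormalFlex (x u v) ↔ NormalFlex u ∧ NormalFlex v :=
  ⟨fun | .xn hu hv => ⟨hu, hv⟩, fun ⟨hu, hv⟩ => .xn hu hv⟩

theorem normalFlex_y_iff : NormalFlex (y u r) ↔ NormalFlex u ∧ RFlex r :=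
  ⟨fun | .yn hu hr => ⟨hu, hr⟩, fun ⟨hu, hr⟩ => .yn hu hr⟩

theorem RFlex.normalFlex : RFlex r → NormalFlex r
  | .leaf => .leaf
  | .xleaf hu => .xn hu .leaf
  | .xy hu hv hr => .xn hu (.yn hv hr)

theorem RFlex.not_isBadFlex_y (u : LTree) : RFlex r → ¬ IsBadFlex (y u r)
  | .leaf => id
  | .xleaf _ => id
  | .xy _ _ _ => id

theorem NormalFlex.rFlex_of_not_isBadFlex_y :
    NormalFlex r → ¬ IsBadFlex (y u r) → RFlex r
  | .leaf, _ => .leaf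
  | .yn _ _, h_good => absurd trivial h_good
  | .xn hu .leaf, _ => .xleaf hu
  | .xn _ (.xn _ _), h_good => absurd trivial h_good
  | .xn hu (.yn hv hr), _ => .xy hu hv hr

theorem rFlex_iff_not_isBadFlex_y_and_normalFlex (u : LTree) :
    RFlex r ↔ ¬ IsBadFlex (y u r) ∧ NormalFlex r :=
  ⟨fun h => ⟨h.not_isBadFlex_y u, h.normalFlex⟩,
    fun ⟨h_good, h⟩ => h.rFlex_of_not_isBadFlex_y h_good⟩

end LTree

open LTree in
/-- A labeled planar binary tree avoids the two patterns `y(*, y(*,*))` and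
`y(*, x(*, x(*,*)))` iff it belongs to the class `N`, where `N` and `R` are the
least classes closed under the indicated constructions. -/
theorem noncomFlex_normal_forms :
    ∀ t : LTree, AvoidsFlex t ↔ NormalFlex t := by
  intro t
  induction t with
  | leaf => exact iff_of_true avoidsFlex_leaf .leaf
  | x u v ihu ihv => rw [avoidsFlex_x_iff, normalFlex_x_iff, ihu, ihv]
  | y u v ihu ihv =>
    rw [avoidsFlex_y_iff, normalFlex_y_iff, rFlex_iff_not_isBadFlex_y_and_normalFlex u, ihu, ihv,
      and_left_comm]
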